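/- For all integers d, k with d > k > 1, the growth constant of closed (d,k)-self-avoiding manifolds is strictly smaller than that of all (d,k)-self-avoiding manifolds: limsup_{n→∞} (c^SAM_{(d,k),n}(0))^{1/n} ≤ 2(d−k)+1 < k(d−k+1) ≤ liminf_{n→∞} (c^SAM_{(d,k),n})^{1/n}. -/

import Mathlib

open Filter

/-- A `k`-face of the hypercubic lattice `ℤ^d`: an orientation set `S ⊆ {1,…,d}`
together with a base vertex `v ∈ ℤ^d`. -/
abbrev Face (d : ℕ) := Finset (Fin d) × (Fin d → ℤ)

/-- The boundary `(k-1)`-edges of a `k`-face `(S, v)`: the `(k-1)`-faces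
`(S \ {i}, v)` and `(S \ {i}, v + e_i)` for `i ∈ S`. -/
def faceEdges {d : ℕ} (f : Face d) : Finset (Face d) :=
  f.1.biUnion fun i =>
    {(f.1.erase i, f.2), (f.1.erase i, f.2 + Pi.single i 1)}

/-- Two faces are adjacent if they are distinct and share a common boundary edge. -/
def FaceAdj {d : ℕ} (f g : Face d) : Prop :=
  f ≠ g ∧ ∃ e, e ∈ faceEdges f ∧ e ∈ faceEdges g

/-- A set of faces is connected with respect to adjacency. -/
def ConnectedFaces {d : ℕ} (M : Finset (Face d)) : Prop :=
  ∀ f ∈ M, ∀ g ∈ M, Relation.ReflTransGen (fun a b => a ∈ M ∧ b ∈ M ∧ FaceAdj a b) f g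

/-- A `(d,k)`-self-avoiding manifold of `k`-area `n`: a connected set of `n` `k`-faces
such that every `(k-1)`-edge bounds at most two of its `k`-faces. -/
def IsSAM (d k n : ℕ) (M : Finset (Face d)) : Prop :=
  M.card = n ∧ (∀ f ∈ M, f.1.card = k) ∧ ConnectedFaces M ∧
    ∀ e : Face d, (M.filter fun f => e ∈ faceEdges f).card ≤ 2

/-- A closed `(d,k)`-self-avoiding manifold: every boundary edge of every face
is shared by exactly two faces. -/
def IsClosedSAM (d k n : ℕ) (M : Finset (Face d)) : Prop :=
  IsSAM d k n M ∧ ∀ f ∈ M, ∀ e ∈ faceEdges f,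
    (M.filter fun g => e ∈ faceEdges g).card = 2

/-- A `(d,k)`-fixed polyominoid of `k`-area `n`: a connected set of `n` `k`-faces. -/
def IsXD (d k n : ℕ) (M : Finset (Face d)) : Prop :=
  M.card = n ∧ (∀ f ∈ M, f.1.card = k) ∧ ConnectedFaces M

/-- Translation of a face by a lattice vector. -/
def translateFace {d : ℕ} (t : Fin d → ℤ) (f : Face d) : Face d := (f.1, f.2 + t)

/-- Two sets of faces are translation-equivalent. -/
def TransEquiv {d : ℕ} (A B : Finset (Face d)) : Prop :=
  ∃ t : Fin d → ℤ, A.image (translateFace t) = B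

/-- The number of `(d,k)`-self-avoiding manifolds of `k`-area `n`, up to translation. -/
noncomputable def samCount (d k n : ℕ) : ℕ :=
  Nat.card (Quot fun A B : {M : Finset (Face d) // IsSAM d k n M} =>
    TransEquiv A.val B.val)

/-- The number of closed `(d,k)`-self-avoiding manifolds of `k`-area `n`, up to
translation. -/
noncomputable def closedSamCount (d k n : ℕ) : ℕ :=
  Nat.card (Quot fun A B : {M : Finset (Face d) // IsClosedSAM d k n M} =>
    TransEquiv A.val B.val)

/-- The number of `(d,k)`-fixed polyominoids of `k`-area `n`, up to translation. -/
noncomputable def xdCount (d k n : ℕ) : ℕ :=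
  Nat.card (Quot fun A B : {M : Finset (Face d) // IsXD d k n M} =>
    TransEquiv A.val B.val)

/-!
Both counts are made on rooted manifolds, those that contain a face `(S, 0)`: every translation
class has such a representative, and there are only `2 ^ d` roots.

*Closed manifolds.* Reveal the faces of a closed manifold one at a time, starting from the root. As
long as the revealed part is not the whole manifold, some edge of it lies in only one revealed
face, and the other face at this edge has to be revealed next. A `(k - 1)`-edge lies in
`2 (d - k) + 2` faces, one of which is already there, so at most `2 (d - k) + 1` choices remain.

*All manifolds.* From a `k`-face one may leave through any of its `k` upper edges into any of the
`d - k + 1` faces having this edge as a lower edge. Each such step raises the sum of the base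
coordinates by one, so a chain of `n` steps never meets itself, no edge bounds three of its faces,
and the `(k (d - k + 1)) ^ n` chains from a given root are pairwise not translates of each other.

For the lower limit to be meaningful in `ℝ`, the number of all manifolds must also be bounded
exponentially; this is a property of connected sets in any relation of bounded degree.
-/

section

open Finset

section Counting

variable {σ X α : Type*}

/-- Search trees: `C s` is the set of objects compatible with the partial information `s`, and `μ s`
bounds the depth of the tree below `s`. -/
theorem encard_le_pow_of_branching {C : σ → Set X} {μ : σ → ℕ} {b : ℕ} (hb : 0 < b)
    (h : ∀ s, (C s).Subsingleton ∨
      ∃ T : Finset σ, #T ≤ b ∧ ∀ x ∈ C s, ∃ t ∈ T, μ t < μ s ∧ x ∈ C t) (s : σ) :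
    (C s).encard ≤ b ^ μ s := by
  suffices ∀ m s, μ s ≤ m → (C s).encard ≤ b ^ m from this _ s le_rfl
  intro m
  induction m with
  | zero =>
    intro s hs
    rw [pow_zero, Set.encard_le_one_iff_subsingleton]
    obtain hC | ⟨T, -, hT⟩ := h s
    · exact hC
    · intro x hx
      obtain ⟨t, -, hts, -⟩ := hT x hx
      omega
  | succ m ih =>
    intro s hs
    obtain hC | ⟨T, hTb, hT⟩ := h s
    · exact (Set.encard_le_one_iff_subsingleton.2 hC).trans
        (one_le_pow₀ (by exact_mod_cast hb))
    · have hcover : C s ⊆ ⋃ t : {t ∈ T | μ t ≤ m}, C t := by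
        intro x hx
        obtain ⟨t, htT, hts, hxt⟩ := hT x hx
        exact Set.mem_iUnion.2 ⟨⟨t, mem_filter.2 ⟨htT, by omega⟩⟩, hxt⟩
      calc (C s).encard ≤ ∑ t : {t ∈ T | μ t ≤ m}, (C t).encard :=
            (Set.encard_le_encard hcover).trans (Set.encard_iUnion_le_of_fintype _)
        _ ≤ ∑ _t : {t ∈ T | μ t ≤ m}, (b : ℕ∞) ^ m :=
            sum_le_sum fun t _ => ih _ (mem_filter.1 t.2).2
        _ = #{t ∈ T | μ t ≤ m} * (b : ℕ∞) ^ m := by simp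
        _ ≤ b * (b : ℕ∞) ^ m := by
            gcongr
            exact (card_filter_le _ _).trans hTb
        _ = b ^ (m + 1) := (pow_succ' _ _).symm

/-- Connectedness of a finite set with respect to an arbitrary relation; `ConnectedFaces` is the
case of `FaceAdj`, by definition. -/
def ConnectedBy (r : α → α → Prop) (s : Finset α) : Prop :=
  ∀ a ∈ s, ∀ b ∈ s, Relation.ReflTransGen (fun x y => x ∈ s ∧ y ∈ s ∧ r x y) a b

namespace ConnectedBy

variable {r : α → α → Prop} {s t : Finset α}

protected theorem singleton (r : α → α → Prop) (a : α) : ConnectedBy r {a} := by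
  intro x hx y hy
  rw [mem_singleton.1 hx, mem_singleton.1 hy]

protected theorem insert [DecidableEq α] {a b : α} (hs : ConnectedBy r s) (ha : a ∈ s) (hab : r a b)
    (hba : r b a) : ConnectedBy r (insert b s) := by
  have hmono : (fun x y => x ∈ s ∧ y ∈ s ∧ r x y) ≤
      fun x y => x ∈ insert b s ∧ y ∈ insert b s ∧ r x y :=
    fun _ _ ⟨hx, hy, hxy⟩ => ⟨mem_insert_of_mem hx, mem_insert_of_mem hy, hxy⟩
  have hb := mem_insert_self b s
  have ha' : a ∈ insert b s := mem_insert_of_mem ha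
  intro x hx y hy
  obtain rfl | hxs := mem_insert.1 hx <;> obtain rfl | hys := mem_insert.1 hy
  · exact .refl
  · exact .head ⟨hb, ha', hba⟩ (Relation.ReflTransGen.mono hmono _ _ (hs a ha y hys))
  · exact .tail (Relation.ReflTransGen.mono hmono _ _ (hs x hxs a ha)) ⟨ha', hb, hab⟩
  · exact Relation.ReflTransGen.mono hmono _ _ (hs x hxs y hys)

protected theorem image {β : Type*} [DecidableEq β] {q : β → β → Prop} {φ : α → β}
    (hs : ConnectedBy r s) (hφ : ∀ a b, r a b → q (φ a) (φ b)) : ConnectedBy q (s.image φ) := by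
  intro x hx y hy
  obtain ⟨a, ha, rfl⟩ := mem_image.1 hx
  obtain ⟨b, hb, rfl⟩ := mem_image.1 hy
  refine Relation.ReflTransGen.lift φ ?_ _ _ (hs a ha b hb)
  exact fun a b ⟨ha, hb, hab⟩ => ⟨mem_image_of_mem φ ha, mem_image_of_mem φ hb, hφ a b hab⟩

theorem eq_of_subset_of_forall_mem (hs : ConnectedBy r s) (hts : t ⊆ s) (ht : t.Nonempty)
    (h : ∀ a ∈ t, ∀ b ∈ s, r a b → b ∈ t) : s = t := by
  obtain ⟨a, ha⟩ := ht
  refine Subset.antisymm (fun b hb => ?_) hts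
  induction hs a (hts ha) b hb with
  | refl => exact ha
  | tail _ hxy ih => exact h _ (ih hxy.1) _ hxy.2.1 hxy.2.2

/-- The connected sets of `n` elements that are still possible when an exploration starting at `a₀`
has accepted the elements of `A` and rejected those of `B`. Here `N a` stands for a finite set
containing the neighbours of `a`. -/
def completions [DecidableEq α] (r : α → α → Prop) (N : α → Finset α) (n : ℕ) (a₀ : α)
    (A B : Finset α) : Set (Finset α) :=
  {s | (#s = n ∧ ConnectedBy r s) ∧ (a₀ ∈ A ∧ A ⊆ s) ∧ B ⊆ s.biUnion N ∧ Disjoint s B}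

section Exploration

variable [DecidableEq α] {N : α → Finset α} {Δ n : ℕ} {a₀ a b : α} {A B : Finset α}

theorem card_add_card_le_of_mem_completions (hΔ : ∀ a, #(N a) ≤ Δ)
    (hs : s ∈ completions r N n a₀ A B) : #A + #B ≤ n + n * Δ := by
  obtain ⟨⟨rfl, -⟩, ⟨-, hA⟩, hB, -⟩ := hs
  exact Nat.add_le_add (card_le_card hA)
    ((card_le_card hB).trans (card_biUnion_le_card_mul _ _ _ fun a _ => hΔ a))

theorem mem_completions_insert_or (ha : a ∈ A) (hb : b ∈ N a)
    (hs : s ∈ completions r N n a₀ A B) :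
    s ∈ completions r N n a₀ (insert b A) B ∨
      s ∈ completions r N n a₀ A (insert b B) := by
  obtain ⟨hconn, ⟨ha₀, hA⟩, hB, hsB⟩ := hs
  by_cases hbs : b ∈ s
  · exact .inl ⟨hconn, ⟨mem_insert_of_mem ha₀, insert_subset hbs hA⟩, hB, hsB⟩
  · exact .inr ⟨hconn, ⟨ha₀, hA⟩, insert_subset (mem_biUnion.2 ⟨a, hA ha, hb⟩) hB,
      disjoint_insert_right.2 ⟨hbs, hsB⟩⟩

theorem eq_of_mem_completions (hN : ∀ a b, r a b → b ∈ N a)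
    (hAB : ∀ a ∈ A, ∀ b ∈ N a, b ∉ A → b ∈ B) (hs : s ∈ completions r N n a₀ A B) : s = A := by
  obtain ⟨⟨-, hconn⟩, ⟨ha₀, hA⟩, -, hsB⟩ := hs
  refine hconn.eq_of_subset_of_forall_mem hA ⟨a₀, ha₀⟩ fun a ha b hb hab => ?_
  by_contra hbA
  exact disjoint_left.1 hsB hb (hAB a ha b (hN a b hab) hbA)

end Exploration

theorem encard_setOf_mem_le {N : α → Finset α} {Δ : ℕ} (hN : ∀ a b, r a b → b ∈ N a)
    (hΔ : ∀ a, #(N a) ≤ Δ) (n : ℕ) (a₀ : α) :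
    {s : Finset α | #s = n ∧ ConnectedBy r s ∧ a₀ ∈ s}.encard ≤ 2 ^ (n + n * Δ) := by
  classical
  have hbranch := encard_le_pow_of_branching (C := fun (A, B) => completions r N n a₀ A B)
    (μ := fun (A, B) => n + n * Δ - (#A + #B)) two_pos ?_ ({a₀}, ∅)
  · refine (Set.encard_le_encard ?_).trans
      (hbranch.trans (pow_le_pow_right₀ one_le_two (Nat.sub_le _ _)))
    rintro s ⟨hsn, hs, ha₀⟩
    simp [completions, hsn, hs, ha₀]
  rintro ⟨A, B⟩
  by_cases h : ∃ a ∈ A, ∃ b ∈ N a, b ∉ A ∧ b ∉ B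
  · obtain ⟨a, ha, b, hb, hbA, hbB⟩ := h
    refine .inr ⟨{(insert b A, B), (A, insert b B)}, card_le_two, fun s hs => ?_⟩
    obtain hs | hs := mem_completions_insert_or ha hb hs
    · have := card_add_card_le_of_mem_completions hΔ hs
      refine ⟨_, mem_insert_self _ _, ?_, hs⟩
      simp only [card_insert_of_notMem hbA] at this ⊢
      omega
    · have := card_add_card_le_of_mem_completions hΔ hs
      refine ⟨_, mem_insert_of_mem (mem_singleton_self _), ?_, hs⟩
      simp only [card_insert_of_notMem hbB] at this ⊢
      omega
  · push Not at h
    exact .inl fun s hs t ht =>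
      (eq_of_mem_completions hN h hs).trans (eq_of_mem_completions hN h ht).symm

end ConnectedBy

end Counting

section Growth

variable {u : ℕ → ℝ} {C r : ℝ}

theorem tendsto_const_mul_pow_rpow_one_div (hC : 0 < C) (hr : 0 ≤ r) :
    Tendsto (fun n : ℕ => (C * r ^ n) ^ (1 / (n : ℝ))) atTop (nhds r) := by
  have hlim : Tendsto (fun n : ℕ => C ^ (1 / (n : ℝ)) * r) atTop (nhds (C ^ (0 : ℝ) * r)) :=
    ((Real.continuousAt_const_rpow hC.ne').tendsto.comp
      tendsto_one_div_atTop_nhds_zero_nat).mul_const r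
  rw [Real.rpow_zero, one_mul] at hlim
  refine hlim.congr' ?_
  filter_upwards [eventually_ne_atTop 0] with n hn
  rw [Real.mul_rpow hC.le (pow_nonneg hr n), one_div, Real.pow_rpow_inv_natCast hr hn]

theorem limsup_rpow_one_div_le (hu : ∀ n, 0 ≤ u n) (hC : 0 < C) (hr : 0 ≤ r)
    (h : ∀ᶠ n in atTop, u n ≤ C * r ^ n) :
    limsup (fun n : ℕ => u n ^ (1 / (n : ℝ))) atTop ≤ r := by
  have hlim := tendsto_const_mul_pow_rpow_one_div hC hr
  have hbelow : IsBoundedUnder (· ≥ ·) atTop fun n : ℕ => u n ^ (1 / (n : ℝ)) :=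
    isBoundedUnder_of ⟨0, fun n => Real.rpow_nonneg (hu n) _⟩
  rw [← hlim.limsup_eq]
  refine limsup_le_limsup ?_ hbelow.isCoboundedUnder_le hlim.isBoundedUnder_le
  filter_upwards [h] with n hn
  exact Real.rpow_le_rpow (hu n) hn (by positivity)

/-- The exponential upper bound is needed because `liminf` of an unbounded real sequence may have
the junk value `0`. -/
theorem le_liminf_rpow_one_div {D q : ℝ} (hC : 0 < C) (hr : 0 ≤ r) (hD : 0 < D) (hq : 0 ≤ q)
    (hlower : ∀ᶠ n in atTop, C * r ^ n ≤ u n) (hupper : ∀ᶠ n in atTop, u n ≤ D * q ^ n) :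
    r ≤ liminf (fun n : ℕ => u n ^ (1 / (n : ℝ))) atTop := by
  have hlim := tendsto_const_mul_pow_rpow_one_div hC hr
  have habove : IsBoundedUnder (· ≤ ·) atTop fun n : ℕ => u n ^ (1 / (n : ℝ)) := by
    refine (tendsto_const_mul_pow_rpow_one_div hD hq).isBoundedUnder_le.mono_le ?_
    filter_upwards [hlower, hupper] with n hl hu
    exact Real.rpow_le_rpow (le_trans (by positivity) hl) hu (by positivity)
  rw [← hlim.liminf_eq]
  refine liminf_le_liminf ?_ hlim.isBoundedUnder_ge habove.isCoboundedUnder_ge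
  filter_upwards [hlower] with n hn
  exact Real.rpow_le_rpow (by positivity) hn (by positivity)

end Growth

variable {d k n : ℕ} {f g e : Face d} {A M : Finset (Face d)}

section Faces

theorem mem_faceEdges :
    e ∈ faceEdges f ↔ ∃ i ∈ f.1, e.1 = f.1.erase i ∧ (e.2 = f.2 ∨ e.2 = f.2 + Pi.single i 1) := by
  simp only [faceEdges, mem_biUnion, mem_insert, mem_singleton, Prod.ext_iff, ← and_or_left]

theorem card_faceEdges_le (f : Face d) : #(faceEdges f) ≤ #f.1 * 2 :=
  card_biUnion_le_card_mul _ _ _ fun _ _ => card_le_two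

theorem FaceAdj.symm (h : FaceAdj f g) : FaceAdj g f :=
  ⟨h.1.symm, h.2.imp fun _ => And.symm⟩

/-- The faces having `e` as a boundary edge. -/
def cofaces (e : Face d) : Finset (Face d) :=
  e.1ᶜ.biUnion fun i => {(insert i e.1, e.2), (insert i e.1, e.2 - Pi.single i 1)}

theorem mem_cofaces (h : e ∈ faceEdges f) : f ∈ cofaces e := by
  obtain ⟨i, hi, he, hv⟩ := mem_faceEdges.1 h
  have hf : f.1 = insert i e.1 := by rw [he, insert_erase hi]
  refine mem_biUnion.2 ⟨i, by simp [he], ?_⟩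
  rw [mem_insert, mem_singleton, Prod.ext_iff, Prod.ext_iff]
  exact hv.imp (fun hv => ⟨hf, hv.symm⟩) fun hv => ⟨hf, by simp [hv]⟩

theorem card_cofaces_le (e : Face d) : #(cofaces e) ≤ (d - #e.1) * 2 := by
  have h : #(cofaces e) ≤ #e.1ᶜ * 2 := card_biUnion_le_card_mul _ _ _ fun _ _ => card_le_two
  rwa [card_compl, Fintype.card_fin] at h

theorem card_cofaces_sdiff_le (hfA : f ∈ A) (he : e ∈ faceEdges f) :
    #(cofaces e \ A) ≤ 2 * (d - #f.1) + 1 := by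
  have hcard : #e.1 + 1 = #f.1 := by
    obtain ⟨i, hi, hei, -⟩ := mem_faceEdges.1 he
    rw [hei, card_erase_add_one hi]
  have hsub : cofaces e \ A ⊆ (cofaces e).erase f := by
    rw [← sdiff_singleton_eq_erase]
    exact sdiff_subset_sdiff Subset.rfl (singleton_subset_iff.2 hfA)
  have hle := card_le_card hsub
  rw [card_erase_of_mem (mem_cofaces he)] at hle
  have := card_cofaces_le e
  omega

/-- A finite set containing every face adjacent to `f`. -/
def neighbors (f : Face d) : Finset (Face d) := (faceEdges f).biUnion cofaces

theorem FaceAdj.mem_neighbors (h : FaceAdj f g) : g ∈ neighbors f := by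
  obtain ⟨-, e, hf, hg⟩ := h
  exact mem_biUnion.2 ⟨e, hf, mem_cofaces hg⟩

theorem card_neighbors_le (f : Face d) : #(neighbors f) ≤ d * 2 * (d * 2) := by
  refine (card_biUnion_le_card_mul _ _ (d * 2) fun e _ => ?_).trans ?_
  · exact (card_cofaces_le e).trans (Nat.mul_le_mul_right 2 (Nat.sub_le _ _))
  · gcongr
    exact (card_faceEdges_le f).trans (Nat.mul_le_mul_right 2 (card_finset_fin_le f.1))

end Faces

section RootedCounts

theorem encard_isSAM_mem_le (d k n : ℕ) (f : Face d) :
    {M | IsSAM d k n M ∧ f ∈ M}.encard ≤ 2 ^ (n + n * (d * 2 * (d * 2))) := by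
  refine (Set.encard_le_encard ?_).trans
    (ConnectedBy.encard_setOf_mem_le (fun _ _ => FaceAdj.mem_neighbors) card_neighbors_le n f)
  exact fun M ⟨hM, hf⟩ => ⟨hM.1, hM.2.2.1, hf⟩

theorem IsSAM.eq_of_subset_of_forall_exists_ne (hM : IsSAM d k n M) (hAM : A ⊆ M)
    (hA : A.Nonempty)
    (h : ∀ f ∈ A, ∀ e ∈ faceEdges f, ∃ g ∈ A, e ∈ faceEdges g ∧ g ≠ f) : M = A := by
  obtain ⟨-, -, hconn, htwo⟩ := hM
  refine ConnectedBy.eq_of_subset_of_forall_mem hconn hAM hA ?_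
  rintro f hf g hg ⟨hfg, e, hef, heg⟩
  obtain ⟨g', hg', heg', hne⟩ := h f hf e hef
  by_contra hgA
  have hgg' : g ≠ g' := fun h => hgA (h ▸ hg')
  have hthree : {f, g, g'} ⊆ {f ∈ M | e ∈ faceEdges f} := by
    simp [insert_subset_iff, *, hAM hf, hAM hg']
  have := (card_le_card hthree).trans (htwo e)
  rw [card_eq_three.2 ⟨f, g, g', hfg, hne.symm, hgg', rfl⟩] at this
  omega

theorem IsClosedSAM.exists_mem_ne (hM : IsClosedSAM d k n M) (hf : f ∈ M)
    (he : e ∈ faceEdges f) : ∃ g ∈ M, e ∈ faceEdges g ∧ g ≠ f := by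
  obtain ⟨g, hg, hgf⟩ := Finset.exists_mem_ne (by rw [hM.2 f hf e he]; exact one_lt_two) f
  exact ⟨g, (mem_filter.1 hg).1, (mem_filter.1 hg).2, hgf⟩

theorem encard_isClosedSAM_mem_le (d k n : ℕ) (f₀ : Face d) :
    {M | IsClosedSAM d k n M ∧ f₀ ∈ M}.encard ≤ ((2 * (d - k) + 1 : ℕ) : ℕ∞) ^ n := by
  let C : Finset (Face d) → Set (Finset (Face d)) := fun A =>
    {M | IsClosedSAM d k n M ∧ f₀ ∈ A ∧ A ⊆ M}
  have hbranch := encard_le_pow_of_branching (C := C) (μ := fun A => n - #A)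
    (Nat.succ_pos (2 * (d - k))) ?_ {f₀}
  · refine (Set.encard_le_encard ?_).trans
      (hbranch.trans (pow_le_pow_right₀ (by simp) (Nat.sub_le _ _)))
    rintro M ⟨hM, hf₀⟩
    simp [C, hM, hf₀]
  intro A
  by_cases h : ∃ f ∈ A, #f.1 = k ∧ ∃ e ∈ faceEdges f, ∀ g ∈ A, e ∈ faceEdges g → g = f
  · obtain ⟨f, hf, rfl, e, he, hfree⟩ := h
    refine .inr ⟨(cofaces e \ A).image fun g => insert g A,
      card_image_le.trans (card_cofaces_sdiff_le hf he), ?_⟩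
    rintro M ⟨hM, hf₀, hAM⟩
    obtain ⟨g, hgM, heg, hgf⟩ := hM.exists_mem_ne (hAM hf) he
    have hgA : g ∉ A := fun hgA => hgf (hfree g hgA heg)
    have hsub : insert g A ⊆ M := insert_subset hgM hAM
    have hle := card_le_card hsub
    rw [card_insert_of_notMem hgA, hM.1.1] at hle
    refine ⟨insert g A, mem_image_of_mem _ (mem_sdiff.2 ⟨mem_cofaces heg, hgA⟩), ?_,
      hM, mem_insert_of_mem hf₀, hsub⟩
    rw [card_insert_of_notMem hgA]
    omega
  · push Not at h
    suffices ∀ M ∈ C A, M = A from .inl fun M hM M' hM' => (this M hM).trans (this M' hM').symm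
    rintro M ⟨hM, hf₀, hAM⟩
    exact hM.1.eq_of_subset_of_forall_exists_ne hAM ⟨f₀, hf₀⟩ fun f hf =>
      h f hf (hM.1.2.1 f (hAM hf))

end RootedCounts

section Translation

theorem translateFace_injective (t : Fin d → ℤ) : Function.Injective (translateFace t) := by
  rintro ⟨S, v⟩ ⟨S', v'⟩ h
  simpa [translateFace] using h

theorem translateFace_zero : translateFace (0 : Fin d → ℤ) = id := by
  funext f
  simp [translateFace]

theorem translateFace_comp_translateFace (s t : Fin d → ℤ) :
    translateFace t ∘ translateFace s = translateFace (s + t) := by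
  funext f
  simp [translateFace, add_assoc]

theorem mem_faceEdges_translateFace {t : Fin d → ℤ} :
    e ∈ faceEdges (translateFace t f) ↔ translateFace (-t) e ∈ faceEdges f := by
  simp only [mem_faceEdges, translateFace, ← sub_eq_add_neg, sub_eq_iff_eq_add, add_right_comm]

theorem FaceAdj.translate (h : FaceAdj f g) (t : Fin d → ℤ) :
    FaceAdj (translateFace t f) (translateFace t g) := by
  obtain ⟨hne, e, hf, hg⟩ := h
  refine ⟨(translateFace_injective t).ne hne, translateFace t e, ?_⟩
  have he : translateFace (-t) (translateFace t e) = e := by simp [translateFace]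
  rw [mem_faceEdges_translateFace, mem_faceEdges_translateFace, he]
  exact ⟨hf, hg⟩

theorem card_filter_mem_faceEdges_image_translateFace (t : Fin d → ℤ) (M : Finset (Face d))
    (e : Face d) :
    #{f ∈ M.image (translateFace t) | e ∈ faceEdges f} =
      #{f ∈ M | translateFace (-t) e ∈ faceEdges f} := by
  rw [filter_image, card_image_of_injective _ (translateFace_injective t)]
  simp only [mem_faceEdges_translateFace]

theorem IsSAM.image_translateFace (h : IsSAM d k n M) (t : Fin d → ℤ) :
    IsSAM d k n (M.image (translateFace t)) := by
  obtain ⟨hcard, hface, hconn, htwo⟩ := h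
  refine ⟨?_, forall_mem_image.2 hface,
    ConnectedBy.image hconn fun _ _ hfg => hfg.translate t, fun e => ?_⟩
  · rw [card_image_of_injective _ (translateFace_injective t), hcard]
  · rw [card_filter_mem_faceEdges_image_translateFace]
    exact htwo _

theorem IsClosedSAM.image_translateFace (h : IsClosedSAM d k n M) (t : Fin d → ℤ) :
    IsClosedSAM d k n (M.image (translateFace t)) := by
  refine ⟨h.1.image_translateFace t, forall_mem_image.2 fun f hf e he => ?_⟩
  rw [card_filter_mem_faceEdges_image_translateFace]
  exact h.2 f hf _ (mem_faceEdges_translateFace.1 he)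

theorem transEquiv_equivalence (d : ℕ) : Equivalence (TransEquiv (d := d)) where
  refl M := ⟨0, by rw [translateFace_zero, image_id]⟩
  symm := by
    rintro M _ ⟨t, rfl⟩
    exact ⟨-t, by rw [image_image, translateFace_comp_translateFace, add_neg_cancel,
      translateFace_zero, image_id]⟩
  trans := by
    rintro M _ _ ⟨s, rfl⟩ ⟨t, rfl⟩
    exact ⟨s + t, by rw [image_image, translateFace_comp_translateFace]⟩

/-- The translation classes of the face sets satisfying `P`; `samCount` and `closedSamCount` are
the cardinalities of two such types, by definition. -/
def TransClasses (P : Finset (Face d) → Prop) : Type :=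
  Quot fun A B : {M : Finset (Face d) // P M} => TransEquiv A.val B.val

variable {P : Finset (Face d) → Prop} {B : Finset (Face d)}

theorem TransClasses.transEquiv_of_mk_eq_mk {hA : P A} {hB : P B}
    (h : (Quot.mk _ ⟨A, hA⟩ : TransClasses P) = Quot.mk _ ⟨B, hB⟩) : TransEquiv A B :=
  ((transEquiv_equivalence d).comap Subtype.val).eqvGen_iff.1 (Quot.eqvGen_exact h)

theorem TransClasses.card_le {b : ℕ∞} (htrans : ∀ M, P M → ∀ t, P (M.image (translateFace t)))
    (hne : ∀ M, P M → M.Nonempty)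
    (hb : ∀ S : Finset (Fin d), {M | P M ∧ (S, 0) ∈ M}.encard ≤ b) :
    ENat.card (TransClasses P) ≤ 2 ^ d * b := by
  let R : Set (Finset (Face d)) := ⋃ S : Finset (Fin d), {M | P M ∧ (S, 0) ∈ M}
  have hR : ∀ M ∈ R, P M := fun M hM => by
    obtain ⟨S, hM, -⟩ := Set.mem_iUnion.1 hM
    exact hM
  have hsurj : Function.Surjective
      fun M : R => (Quot.mk _ ⟨M.1, hR M.1 M.2⟩ : TransClasses P) := by
    rintro ⟨M, hM⟩
    obtain ⟨f, hf⟩ := hne M hM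
    have hroot : (f.1, 0) ∈ M.image (translateFace (-f.2)) :=
      mem_image.2 ⟨f, hf, by simp [translateFace]⟩
    exact ⟨⟨M.image (translateFace (-f.2)), Set.mem_iUnion.2 ⟨f.1, htrans M hM _, hroot⟩⟩,
      (Quot.sound ⟨-f.2, rfl⟩).symm⟩
  calc ENat.card (TransClasses P) ≤ R.encard :=
        ENat.card_le_card_of_injective (Function.injective_surjInv hsurj)
    _ ≤ ∑ S : Finset (Fin d), {M | P M ∧ (S, 0) ∈ M}.encard := Set.encard_iUnion_le_of_fintype _
    _ ≤ ∑ _S : Finset (Fin d), b := sum_le_sum fun S _ => hb S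
    _ = 2 ^ d * b := by simp

theorem IsSAM.nonempty (h : IsSAM d k n M) (hn : n ≠ 0) : M.Nonempty := by
  rwa [← card_ne_zero, h.1]

theorem card_transClasses_isSAM_le (hn : n ≠ 0) :
    ENat.card (TransClasses (IsSAM d k n)) ≤
      ((2 ^ d * (2 ^ (1 + d * 2 * (d * 2))) ^ n : ℕ) : ℕ∞) := by
  refine (TransClasses.card_le (fun _ hM => hM.image_translateFace) (fun _ hM => hM.nonempty hn)
    fun S => encard_isSAM_mem_le d k n (S, 0)).trans_eq ?_
  push_cast
  rw [← pow_mul]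
  ring

theorem closedSamCount_le (hn : n ≠ 0) :
    closedSamCount d k n ≤ 2 ^ d * (2 * (d - k) + 1) ^ n := by
  refine ENat.toNat_le_of_le_natCast ?_
  push_cast
  exact TransClasses.card_le (fun _ hM => hM.image_translateFace) (fun _ hM => hM.1.nonempty hn)
    fun S => by simpa using encard_isClosedSAM_mem_le d k n (S, 0)

end Translation

section DirectedChains

/-- The sum of the coordinates of the base vertex, which increases along directed chains. -/
def level (f : Face d) : ℤ := ∑ i, f.2 i

theorem level_add_single (S T : Finset (Fin d)) (v : Fin d → ℤ) (i : Fin d) :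
    level (S, v + Pi.single i 1) = level (T, v) + 1 := by
  simp [level, sum_add_distrib]

theorem level_translateFace (t : Fin d → ℤ) (f : Face d) :
    level (translateFace t f) = level f + ∑ i, t i := by
  simp [level, translateFace, sum_add_distrib]

theorem level_eq_or_of_mem_faceEdges (h : e ∈ faceEdges f) :
    level f = level e ∨ level f = level e - 1 := by
  obtain ⟨i, -, -, hv | hv⟩ := mem_faceEdges.1 h
  · exact .inl (by rw [level, level, hv])
  · exact .inr (by simp [level, hv, sum_add_distrib])

/-- The faces having one of the upper edges `(S \ {i}, v + e_i)` of the face `(S, v)` as a lower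
edge. -/
def successors (f : Face d) : Finset (Face d) :=
  (f.1.sigma fun i => (f.1.erase i)ᶜ).image fun p =>
    (insert p.2 (f.1.erase p.1), f.2 + Pi.single p.1 1)

theorem mem_successors : g ∈ successors f ↔
    ∃ i ∈ f.1, ∃ j ∉ f.1.erase i, (insert j (f.1.erase i), f.2 + Pi.single i 1) = g := by
  simp only [successors, mem_image, mem_sigma, mem_compl, Sigma.exists, and_assoc,
    exists_and_left]

theorem card_successors (f : Face d) : #(successors f) = #f.1 * (d - #f.1 + 1) := by
  rw [successors, card_image_of_injOn, card_sigma, sum_const_nat]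
  · intro i hi
    have hpos := card_pos.2 ⟨i, hi⟩
    have hle := card_finset_fin_le f.1
    rw [card_compl, card_erase_of_mem hi, Fintype.card_fin]
    omega
  · rintro ⟨i, j⟩ hij ⟨i', j'⟩ - heq
    obtain ⟨hS, hv⟩ := Prod.ext_iff.1 heq
    obtain rfl : i = i' := by
      simpa [Pi.single_apply] using congrFun (add_left_cancel hv) i
    have hj : j ∉ f.1.erase i := mem_compl.1 (mem_sigma.1 hij).2
    obtain rfl : j = j' := (insert_inj hj).1 hS
    rfl

theorem level_of_mem_successors (h : g ∈ successors f) : level g = level f + 1 := by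
  obtain ⟨i, -, j, -, rfl⟩ := mem_successors.1 h
  exact level_add_single _ _ _ _

theorem card_of_mem_successors (h : g ∈ successors f) : #g.1 = #f.1 := by
  obtain ⟨i, hi, j, hj, rfl⟩ := mem_successors.1 h
  rw [card_insert_of_notMem hj, card_erase_add_one hi]

theorem faceAdj_of_mem_successors (h : g ∈ successors f) : FaceAdj f g := by
  refine ⟨fun hfg => ?_, ?_⟩
  · have := level_of_mem_successors h
    rw [hfg] at this
    omega
  · obtain ⟨i, hi, j, hj, rfl⟩ := mem_successors.1 h
    exact ⟨(f.1.erase i, f.2 + Pi.single i 1), mem_faceEdges.2 ⟨i, hi, rfl, .inr rfl⟩,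
      mem_faceEdges.2 ⟨j, mem_insert_self _ _, (erase_insert hj).symm, .inl rfl⟩⟩

/-- The face sets of the chains of `n + 1` faces that start at `f` and pass from each face to one
of its successors. -/
def directedChains : ℕ → Face d → Finset (Finset (Face d))
  | 0, f => {{f}}
  | n + 1, f => (successors f).biUnion fun g => (directedChains n g).image (insert f)

theorem mem_directedChains_succ : M ∈ directedChains (n + 1) f ↔
    ∃ g ∈ successors f, ∃ M' ∈ directedChains n g, insert f M' = M := by
  simp only [directedChains, mem_biUnion, mem_image]

theorem mem_of_mem_directedChains (h : M ∈ directedChains n f) : f ∈ M := by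
  cases n with
  | zero => simp [mem_singleton.1 h]
  | succ n =>
    obtain ⟨g, -, M', -, rfl⟩ := mem_directedChains_succ.1 h
    exact mem_insert_self _ _

theorem eq_or_level_lt_of_mem_directedChains (h : M ∈ directedChains n f) (hg : g ∈ M) :
    g = f ∨ level f < level g := by
  induction n generalizing f M with
  | zero =>
    obtain rfl := mem_singleton.1 h
    exact .inl (mem_singleton.1 hg)
  | succ n ih =>
    obtain ⟨f', hf', M', hM', rfl⟩ := mem_directedChains_succ.1 h
    have := level_of_mem_successors hf'
    refine (mem_insert.1 hg).imp_right fun hg => ?_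
    obtain rfl | hlt := ih hM' hg <;> omega

theorem level_lt_of_mem_directedChains_successor (hf : g ∈ successors f)
    (hM : M ∈ directedChains n g) {x : Face d} (hx : x ∈ M) : level f < level x := by
  have := level_of_mem_successors hf
  obtain rfl | hlt := eq_or_level_lt_of_mem_directedChains hM hx <;> omega

theorem notMem_of_mem_directedChains_successor (hf : g ∈ successors f)
    (hM : M ∈ directedChains n g) : f ∉ M := fun h =>
  (level_lt_of_mem_directedChains_successor hf hM h).false

theorem card_of_mem_directedChains (h : M ∈ directedChains n f) : #M = n + 1 := by
  induction n generalizing f M with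
  | zero => rw [mem_singleton.1 h, card_singleton]
  | succ n ih =>
    obtain ⟨g, hg, M', hM', rfl⟩ := mem_directedChains_succ.1 h
    rw [card_insert_of_notMem (notMem_of_mem_directedChains_successor hg hM'), ih hM']

theorem card_face_of_mem_directedChains (h : M ∈ directedChains n f) (hg : g ∈ M) :
    #g.1 = #f.1 := by
  induction n generalizing f M with
  | zero =>
    obtain rfl := mem_singleton.1 h
    rw [mem_singleton.1 hg]
  | succ n ih =>
    obtain ⟨f', hf', M', hM', rfl⟩ := mem_directedChains_succ.1 h
    obtain rfl | hg := mem_insert.1 hg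
    · rfl
    · rw [ih hM' hg, card_of_mem_successors hf']

theorem injOn_level_of_mem_directedChains (h : M ∈ directedChains n f) :
    Set.InjOn level (M : Set (Face d)) := by
  induction n generalizing f M with
  | zero => simp [mem_singleton.1 h]
  | succ n ih =>
    obtain ⟨g, hg, M', hM', rfl⟩ := mem_directedChains_succ.1 h
    rw [coe_insert, Set.injOn_insert (notMem_of_mem_directedChains_successor hg hM')]
    refine ⟨ih hM', ?_⟩
    rintro ⟨x, hx, hlevel⟩
    exact (level_lt_of_mem_directedChains_successor hg hM' hx).ne' hlevel

theorem connectedFaces_of_mem_directedChains (h : M ∈ directedChains n f) : ConnectedFaces M := by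
  induction n generalizing f M with
  | zero => exact mem_singleton.1 h ▸ ConnectedBy.singleton FaceAdj f
  | succ n ih =>
    obtain ⟨g, hg, M', hM', rfl⟩ := mem_directedChains_succ.1 h
    have hadj := faceAdj_of_mem_successors hg
    exact ConnectedBy.insert (ih hM') (mem_of_mem_directedChains hM') hadj.symm hadj

theorem card_filter_mem_faceEdges_le_two (hM : Set.InjOn level (M : Set (Face d))) (e : Face d) :
    #{f ∈ M | e ∈ faceEdges f} ≤ 2 := by
  refine (card_le_card_of_injOn level (t := {level e, level e - 1}) ?_ ?_).trans card_le_two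
  · intro f hf
    simpa using level_eq_or_of_mem_faceEdges (mem_filter.1 hf).2
  · exact hM.mono (coe_subset.2 (filter_subset _ _))

theorem isSAM_of_mem_directedChains (h : M ∈ directedChains n f) : IsSAM d (#f.1) (n + 1) M :=
  ⟨card_of_mem_directedChains h, fun _ => card_face_of_mem_directedChains h,
    connectedFaces_of_mem_directedChains h,
    card_filter_mem_faceEdges_le_two (injOn_level_of_mem_directedChains h)⟩

theorem translateFace_eq_of_mem_directedChains {t : Fin d → ℤ} (hA : A ∈ directedChains n f)
    (hB : A.image (translateFace t) ∈ directedChains n g) : translateFace t f = g := by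
  have hf := mem_image_of_mem (translateFace t) (mem_of_mem_directedChains hA)
  obtain ⟨a, ha, hag⟩ := mem_image.1 (mem_of_mem_directedChains hB)
  obtain hfg | hlt := eq_or_level_lt_of_mem_directedChains hB hf
  · exact hfg
  obtain rfl | hfa := eq_or_level_lt_of_mem_directedChains hA ha
  · exact hag
  rw [← hag, level_translateFace, level_translateFace] at hlt
  omega

theorem eq_of_transEquiv_of_mem_directedChains {B : Finset (Face d)}
    (hA : A ∈ directedChains n f) (hB : B ∈ directedChains n f) (h : TransEquiv A B) : A = B := by
  obtain ⟨t, rfl⟩ := h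
  obtain rfl : t = 0 := by
    simpa [translateFace, Prod.ext_iff] using translateFace_eq_of_mem_directedChains hA hB
  rw [translateFace_zero, image_id]

theorem eq_of_mem_directedChains (hf : M ∈ directedChains n f) (hg : M ∈ directedChains n g) :
    f = g := by
  simpa [translateFace_zero] using
    translateFace_eq_of_mem_directedChains (t := 0) hf (by rwa [translateFace_zero, image_id])

theorem card_directedChains (n : ℕ) (f : Face d) :
    #(directedChains n f) = (#f.1 * (d - #f.1 + 1)) ^ n := by
  induction n generalizing f with
  | zero => rw [directedChains, card_singleton, pow_zero]
  | succ n ih =>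
    have hcard : ∀ g ∈ successors f,
        #((directedChains n g).image (insert f)) = (#f.1 * (d - #f.1 + 1)) ^ n := by
      intro g hg
      rw [card_image_of_injOn, ih, card_of_mem_successors hg]
      intro A hA B hB hAB
      rw [← erase_insert (notMem_of_mem_directedChains_successor hg hA), hAB,
        erase_insert (notMem_of_mem_directedChains_successor hg hB)]
    rw [directedChains, card_biUnion, sum_const_nat hcard, card_successors, pow_succ']
    intro g hg g' hg' hne
    refine disjoint_left.2 fun M hM hM' => hne ?_
    obtain ⟨A, hA, rfl⟩ := mem_image.1 hM
    obtain ⟨B, hB, hAB⟩ := mem_image.1 hM'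
    obtain rfl : A = B := by
      rw [← erase_insert (notMem_of_mem_directedChains_successor hg hA), ← hAB,
        erase_insert (notMem_of_mem_directedChains_successor hg' hB)]
    exact eq_of_mem_directedChains hA hB

theorem pow_le_samCount_succ (n : ℕ) (hkd : k ≤ d) :
    (k * (d - k + 1)) ^ n ≤ samCount d k (n + 1) := by
  obtain ⟨S, -, rfl⟩ := exists_subset_card_eq (s := (univ : Finset (Fin d))) (by simpa using hkd)
  have : Finite (TransClasses (IsSAM d #S (n + 1))) :=
    ENat.card_lt_top.1 <|
      (card_transClasses_isSAM_le n.succ_ne_zero).trans_lt (ENat.natCast_lt_top _)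
  rw [← card_directedChains n (S, 0), ← Nat.card_eq_finsetCard]
  refine Nat.card_le_card_of_injective (β := TransClasses (IsSAM d #S (n + 1)))
    (fun M => Quot.mk _ ⟨M.1, isSAM_of_mem_directedChains M.2⟩) fun A B hAB => Subtype.ext ?_
  have hequiv : TransEquiv A.1 B.1 := TransClasses.transEquiv_of_mk_eq_mk hAB
  exact eq_of_transEquiv_of_mem_directedChains A.2 B.2 hequiv

end DirectedChains

theorem limsup_closedSamCount_rpow_le (d k : ℕ) :
    limsup (fun n : ℕ => (closedSamCount d k n : ℝ) ^ (1 / (n : ℝ))) atTop ≤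
      ((2 * (d - k) + 1 : ℕ) : ℝ) := by
  refine limsup_rpow_one_div_le (C := 2 ^ d) (fun _ => Nat.cast_nonneg _) (by positivity)
    (Nat.cast_nonneg _) ?_
  filter_upwards [eventually_ne_atTop 0] with n hn
  exact_mod_cast closedSamCount_le hn

theorem le_liminf_samCount_rpow (hk : 0 < k) (hkd : k ≤ d) :
    ((k * (d - k + 1) : ℕ) : ℝ) ≤
      liminf (fun n : ℕ => (samCount d k n : ℝ) ^ (1 / (n : ℝ))) atTop := by
  have hpos : (0 : ℝ) < ((k * (d - k + 1) : ℕ) : ℝ) := by positivity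
  refine le_liminf_rpow_one_div (C := ((k * (d - k + 1) : ℕ) : ℝ)⁻¹) (D := 2 ^ d)
    (q := 2 ^ (1 + d * 2 * (d * 2))) (by positivity) hpos.le (by positivity) (by positivity) ?_ ?_
  · filter_upwards [eventually_ne_atTop 0] with n hn
    obtain ⟨m, rfl⟩ := Nat.exists_eq_succ_of_ne_zero hn
    rw [pow_succ', inv_mul_cancel_left₀ hpos.ne']
    exact_mod_cast pow_le_samCount_succ m hkd
  · filter_upwards [eventually_ne_atTop 0] with n hn
    exact_mod_cast ENat.toNat_le_of_le_natCast (card_transClasses_isSAM_le (d := d) (k := k) hn)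

end

theorem closed_sam_growth_strictly_smaller (d k : ℕ) (hk : 1 < k) (hkd : k < d) :
    limsup (fun n : ℕ => (closedSamCount d k n : ℝ) ^ (1 / (n : ℝ))) atTop ≤
        ((2 * (d - k) + 1 : ℕ) : ℝ) ∧
      ((2 * (d - k) + 1 : ℕ) : ℝ) < ((k * (d - k + 1) : ℕ) : ℝ) ∧
      ((k * (d - k + 1) : ℕ) : ℝ) ≤
        liminf (fun n : ℕ => (samCount d k n : ℝ) ^ (1 / (n : ℝ))) atTop := by
  have hlt : 2 * (d - k) + 1 < k * (d - k + 1) := by nlinarith [Nat.zero_le (d - k)]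
  exact ⟨limsup_closedSamCount_rpow_le d k, by exact_mod_cast hlt,
    le_liminf_samCount_rpow (Nat.zero_lt_of_lt hk) hkd.le⟩
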